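/- Every class of languages that is Ex-learnable from informant by a locally conservative iterative learner is Ex-learnable from informant by a witness-based iterative learner; that is, [ItInfLocConvEx] ⊆ [ItInfWbEx]. -/

import Mathlib

/-- `W p` is the domain of the `p`-th partial computable function
(the `W`-hypothesis space for an acceptable numbering). -/
def W (p : ℕ) : Set ℕ := {n | ((Denumerable.ofNat Nat.Partrec.Code p).eval n).Dom}

/-- A labeled datum: a natural number together with a Boolean label. -/
abbrev Datum := ℕ × Bool

/-- The initial segment `I[t]` of an informant `I`, of length `t`. -/
def seg (I : ℕ → Datum) (t : ℕ) : List Datum := (List.range t).map I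

/-- The positively labeled numbers occurring in a finite sequence. -/
def posOf (σ : List Datum) : Set ℕ := {x | (x, true) ∈ σ}

/-- The negatively labeled numbers occurring in a finite sequence. -/
def negOf (σ : List Datum) : Set ℕ := {x | (x, false) ∈ σ}

/-- A finite sequence over ℕ × Bool is consistently labeled. -/
def ConsistentSeq (σ : List Datum) : Prop :=
  ∀ x b b', (x, b) ∈ σ → (x, b') ∈ σ → b = b'

/-- `I` is an informant for the language `L`. -/
def IsInformant (L : Set ℕ) (I : ℕ → Datum) : Prop :=
  (∀ t, ((I t).2 = true ↔ (I t).1 ∈ L)) ∧ Function.Surjective (fun t => (I t).1)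

/-- `M` Ex-learns `L` from the particular informant `I`. -/
def ExLearnsFrom (M : List Datum →. ℕ) (L : Set ℕ) (I : ℕ → Datum) : Prop :=
  ∃ t₀ e, W e = L ∧ ∀ t, t₀ ≤ t → M (seg I t) = Part.some e

/-- `M` Ex-learns `L` from informant. -/
def ExLearns (M : List Datum →. ℕ) (L : Set ℕ) : Prop :=
  ∀ I, IsInformant L I → ExLearnsFrom M L I

/-- `M` is an iterative learner: its value on `σ⌢x` is computed from its
value on `σ` and the datum `x` alone. -/
def Iterative (M : List Datum →. ℕ) : Prop :=
  ∃ h : ℕ × Datum →. ℕ, Partrec h ∧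
    ∀ σ x, M (σ ++ [x]) = (M σ).bind (fun e => h (e, x))

/-- `𝓛 ∈ [ItInfEx]`: some iterative partial computable learner
Ex-learns every member of `𝓛` from informant. -/
def ItInfEx (𝓛 : Set (Set ℕ)) : Prop :=
  ∃ M : List Datum →. ℕ, Partrec M ∧ Iterative M ∧ ∀ L ∈ 𝓛, ExLearns M L

/-- `M` is locally conservative on `I`: a mind change at time `t` only occurs when the
datum `I(t)` just seen is inconsistent with the current conjecture. -/
def LocConvOn (M : List Datum →. ℕ) (I : ℕ → Datum) : Prop :=
  ∀ t, ∀ e e', M (seg I t) = Part.some e → M (seg I (t + 1)) = Part.some e' → e ≠ e' →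
    ((I t).2 = true ∧ (I t).1 ∉ W e) ∨ ((I t).2 = false ∧ (I t).1 ∈ W e)

/-- `M` is witness-based on `I`: every mind change is witnessed by some false negative
or false positive datum. -/
def WbOn (M : List Datum →. ℕ) (I : ℕ → Datum) : Prop :=
  ∀ r s t, r < s → s ≤ t → ∀ er es et,
    M (seg I r) = Part.some er → M (seg I s) = Part.some es → M (seg I t) = Part.some et →
    er ≠ es →
    (posOf (seg I s) ∩ (W et \ W er)).Nonempty ∨
    (negOf (seg I s) ∩ (W er \ W et)).Nonempty

/-- `𝓛 ∈ [ItInfLocConvEx]`. -/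
def ItInfLocConvEx (𝓛 : Set (Set ℕ)) : Prop :=
  ∃ M : List Datum →. ℕ, Partrec M ∧ Iterative M ∧
    (∀ L ∈ 𝓛, ExLearns M L) ∧
    ∀ L ∈ 𝓛, ∀ I, IsInformant L I → LocConvOn M I

/-- `𝓛 ∈ [ItInfWbEx]`. -/
def ItInfWbEx (𝓛 : Set (Set ℕ)) : Prop :=
  ∃ M : List Datum →. ℕ, Partrec M ∧ Iterative M ∧
    (∀ L ∈ 𝓛, ExLearns M L) ∧
    ∀ L ∈ 𝓛, ∀ I, IsInformant L I → WbOn M I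

namespace LocWb

open Nat.Partrec (Code)

abbrev State := ℕ × List Datum

def memB (d : Datum) (P : List Datum) : Bool := decide (@List.idxOf Datum instBEqOfDecidableEq d P < P.length)

theorem memB_iff (d : Datum) (P : List Datum) : memB d P = true ↔ d ∈ P := by
  simp [memB, List.idxOf_lt_length_iff]

theorem memB_comp : Computable₂ memB := by
  have h1 : Primrec₂ (fun (d : Datum) (P : List Datum) =>
      @List.idxOf Datum instBEqOfDecidableEq d P) := Primrec.list_idxOf
  have h2 : PrimrecPred (fun q : Datum × List Datum =>
      @List.idxOf Datum instBEqOfDecidableEq q.1 q.2 < q.2.length) :=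
    Primrec.nat_lt.comp h1 (Primrec.list_length.comp Primrec.snd)
  exact h2.decide.to_comp

/-- The patched universal function. -/
def patch (q : State × ℕ) : Part ℕ :=
  bif memB (q.2, false) q.1.2 then Part.none
  else bif memB (q.2, true) q.1.2 then Part.some 0
  else (Denumerable.ofNat Code q.1.1).eval q.2

theorem patch_part : Partrec patch := by
  have hP : Computable (fun q : State × ℕ => q.1.2) := Computable.snd.comp Computable.fst
  have hm (b : Bool) : Computable (fun q : State × ℕ => memB (q.2, b) q.1.2) :=
    memB_comp.comp (Computable.pair Computable.snd (Computable.const b)) hP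
  have he : Partrec (fun q : State × ℕ => (Denumerable.ofNat Code q.1.1).eval q.2) :=
    Code.eval_part.comp
      ((Computable.ofNat Code).comp (Computable.fst.comp Computable.fst)) Computable.snd
  exact Partrec.cond (hm false) Partrec.none
    (Partrec.cond (hm true) (Computable.const 0).partrec he)

theorem exists_index : ∃ c : Code, ∀ s : State, ∀ y, y ∈ W (Encodable.encode (c.curry (Encodable.encode s))) ↔
    ((y, false) ∉ s.2 ∧ ((y, true) ∈ s.2 ∨ y ∈ W s.1)) := by
  obtain ⟨c, hc⟩ := Code.exists_code.1 patch_part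
  refine ⟨c, fun s y => ?_⟩
  have : ((c.curry (Encodable.encode s)).eval y).Dom ↔ (patch (s, y)).Dom := by
    rw [Code.eval_curry, hc]
    have : Nat.pair (Encodable.encode s) y = Encodable.encode (s, y) := by simp
    rw [this]
    simp only [Encodable.encodek]
    simp
  simp only [W, Set.mem_ofPred_eq, Denumerable.ofNat_encode]
  rw [this, patch]
  simp only [← memB_iff]
  cases memB (y, false) s.2 <;> cases memB (y, true) s.2 <;> simp

/-- One step of the new learner on states. -/
def step (h : ℕ × Datum →. ℕ) (q : State × Datum) : Part State :=
  bif memB q.2 q.1.2 then Part.some q.1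
  else (h (q.1.1, q.2)).map (fun e' =>
    bif decide (e' = q.1.1) then q.1 else (e', q.2 :: q.1.2))

theorem step_part {h : ℕ × Datum →. ℕ} (hh : Partrec h) : Partrec (step h) := by
  refine Partrec.cond ?_ Computable.fst.partrec ?_
  · exact memB_comp.comp Computable.snd (Computable.snd.comp Computable.fst)
  · refine Partrec.map (hh.comp ((Computable.fst.comp Computable.fst).pair Computable.snd)) ?_
    have e1 : Computable (fun z : (State × Datum) × ℕ => z.2) := Computable.snd
    have e2 : Computable (fun z : (State × Datum) × ℕ => z.1.1) :=
      Computable.fst.comp Computable.fst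
    have e3 : Computable (fun z : (State × Datum) × ℕ => z.1.2) :=
      Computable.snd.comp Computable.fst
    have e4 : Computable (fun z : (State × Datum) × ℕ => decide (z.2 = z.1.1.1)) :=
      (Primrec.eq (α := ℕ)).decide.to_comp.comp e1 (Computable.fst.comp e2)
    exact Computable.cond e4 e2
      (e1.pair (Computable.list_cons.comp e3 (Computable.snd.comp e2)))

def run (h : ℕ × Datum →. ℕ) (s0 : State) (σ : List Datum) : Part State :=
  σ.foldl (fun s x => s.bind (fun s => step h (s, x))) (Part.some s0)

theorem run_append (h : ℕ × Datum →. ℕ) (s0 : State) (σ : List Datum) (x : Datum) :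
    run h s0 (σ ++ [x]) = (run h s0 σ).bind (fun s => step h (s, x)) := by
  simp [run]

theorem run_part {h : ℕ × Datum →. ℕ} (hh : Partrec h) (s0 : State) :
    Partrec (run h s0) := by
  have hstep : Partrec₂ (fun (σ : List Datum) (q : ℕ × State) =>
      ((σ[q.1]? : Option Datum) : Part Datum).bind (fun x => step h (q.2, x))) := by
    refine Partrec.bind (Computable.ofOption ?_) ?_
    · exact Computable.list_getElem?.comp Computable.fst (Computable.fst.comp Computable.snd)
    · exact (step_part hh).comp
        ((Computable.snd.comp (Computable.snd.comp Computable.fst)).pair Computable.snd)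
  have := Partrec.nat_rec (f := fun σ : List Datum => σ.length)
    (g := fun _ => Part.some s0) Computable.list_length (Computable.const s0).partrec hstep
  refine this.of_eq (fun σ => ?_)
  have key : ∀ k, k ≤ σ.length →
      (Nat.rec (Part.some s0) (fun y IH => IH.bind (fun i =>
        ((σ[y]? : Option Datum) : Part Datum).bind (fun x => step h (i, x)))) k : Part State)
        = run h s0 (σ.take k) := by
    intro k
    induction k with
    | zero => intro _; simp [run]
    | succ k ih =>
      intro hk
      have hk' : k < σ.length := hk
      have e : σ.take (k+1) = σ.take k ++ [σ[k]] := by simp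
      rw [e, run_append, ← ih hk'.le]
      simp [hk']
  simpa using key σ.length le_rfl

theorem step_cases {h : ℕ × Datum →. ℕ} {s s' : State} {x : Datum}
    (hs : step h (s, x) = Part.some s') :
    s' = s ∨ (x ∉ s.2 ∧ s'.1 ≠ s.1 ∧ s'.2 = x :: s.2) := by
  by_cases hx : x ∈ s.2
  · left
    rw [step, (memB_iff _ _).2 hx] at hs
    simpa using hs.symm
  · have hm : memB x s.2 = false := by
      rw [← Bool.not_eq_true, memB_iff]; exact hx
    have hs' : s' ∈ step h (s, x) := by rw [hs]; exact Part.mem_some _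
    rw [step] at hs'
    simp only [hm, cond_false, Part.mem_map_iff] at hs'
    obtain ⟨e', _, rfl⟩ := hs'
    by_cases he : e' = s.1
    · left; simp [he]
    · right; simp [he, hx]

theorem step_fst {h : ℕ × Datum →. ℕ} {s : State} {x : Datum} (hx : x ∉ s.2) :
    (step h (s, x)).map Prod.fst = h (s.1, x) := by
  have hm : memB x s.2 = false := by
    rw [← Bool.not_eq_true, memB_iff]; exact hx
  rw [step]
  simp only [hm, cond_false, Part.map_map]
  convert Part.map_id' _ _ using 2
  intro e'
  by_cases he : e' = s.1 <;> simp [he]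

theorem step_mem {h : ℕ × Datum →. ℕ} {s : State} {x : Datum} (hx : x ∈ s.2) :
    step h (s, x) = Part.some s := by
  rw [step, (memB_iff _ _).2 hx]; rfl

theorem seg_succ (I : ℕ → Datum) (t : ℕ) : seg I (t+1) = seg I t ++ [I t] := by
  simp [seg, List.range_succ]

theorem mem_seg {I : ℕ → Datum} {t : ℕ} {d : Datum} : d ∈ seg I t ↔ ∃ u < t, I u = d := by
  simp [seg]

section
variable (h : ℕ × Datum →. ℕ) (e0 : ℕ) (I : ℕ → Datum)

abbrev R (t : ℕ) : Part State := run h (e0, []) (seg I t)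

theorem R_succ (t : ℕ) : R h e0 I (t+1) = (R h e0 I t).bind (fun s => step h (s, I t)) := by
  simp only [R, seg_succ, run_append]

theorem R_pred {t : ℕ} {s' : State} (hs : R h e0 I (t+1) = Part.some s') :
    ∃ s, R h e0 I t = Part.some s ∧ step h (s, I t) = Part.some s' := by
  rw [R_succ] at hs
  have : s' ∈ (R h e0 I t).bind (fun s => step h (s, I t)) := by
    rw [hs]; exact Part.mem_some _
  obtain ⟨s, h1, h2⟩ := Part.mem_bind_iff.1 this
  exact ⟨s, Part.eq_some_iff.2 h1, Part.eq_some_iff.2 h2⟩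

theorem R_sub : ∀ {t : ℕ} {s : State}, R h e0 I t = Part.some s → ∀ d ∈ s.2, ∃ u < t, I u = d := by
  intro t
  induction t with
  | zero =>
    intro s hs d hd
    have : s = (e0, []) := by simpa [R, run, seg] using hs.symm
    subst this
    simp at hd
  | succ t ih =>
    intro s' hs d hd
    obtain ⟨s, h1, h2⟩ := R_pred h e0 I hs
    rcases step_cases h2 with rfl | ⟨_, _, h3⟩
    · obtain ⟨u, hu, hd⟩ := ih h1 d hd
      exact ⟨u, by omega, hd⟩
    · rw [h3, List.mem_cons] at hd
      rcases hd with rfl | hd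
      · exact ⟨t, by omega, rfl⟩
      · obtain ⟨u, hu, hd⟩ := ih h1 d hd
        exact ⟨u, by omega, hd⟩

/-- Times at which the datum is passed on to the simulated learner. -/
def Act (t : ℕ) : Prop := ¬ ∃ s, R h e0 I t = Part.some s ∧ I t ∈ s.2

open Classical in
/-- The simulated informant. -/
noncomputable def sim (k : ℕ) : Datum := I (Nat.nth (Act h e0 I) k)

theorem exists_first (hI : Function.Surjective (fun t => (I t).1)) (x : ℕ) :
    ∃ t, Act h e0 I t ∧ (I t).1 = x := by
  classical
  have hx : ∃ t, (I t).1 = x := hI x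
  refine ⟨Nat.find hx, ?_, Nat.find_spec hx⟩
  rintro ⟨s, hs, hm⟩
  obtain ⟨u, hu, hd⟩ := R_sub h e0 I hs _ hm
  refine Nat.find_min hx hu ?_
  rw [hd]; exact Nat.find_spec hx

theorem sim_informant {L : Set ℕ} (hI : IsInformant L I) : IsInformant L (sim h e0 I) := by
  classical
  refine ⟨fun k => hI.1 _, fun x => ?_⟩
  obtain ⟨t, ht, hx⟩ := exists_first h e0 I hI.2 x
  refine ⟨Nat.count (Act h e0 I) t, ?_⟩
  simp only [sim]
  rw [Nat.nth_count ht, hx]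

theorem act_infinite (hI : Function.Surjective (fun t => (I t).1)) :
    {t | Act h e0 I t}.Infinite := by
  apply Set.Infinite.of_image (fun t => (I t).1)
  convert Set.infinite_univ (α := ℕ)
  ext x
  simpa using exists_first h e0 I hI x

open Classical in
theorem R_fst (M : List Datum →. ℕ) (hM0 : M [] = Part.some e0)
    (hM : ∀ σ x, M (σ ++ [x]) = (M σ).bind (fun e => h (e, x))) (t : ℕ) :
    (R h e0 I t).map Prod.fst = M (seg (sim h e0 I) (Nat.count (Act h e0 I) t)) := by
  induction t with
  | zero => simp [R, run, seg, hM0]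
  | succ t ih =>
    rw [R_succ, Nat.count_succ]
    by_cases ht : Act h e0 I t
    · rw [if_pos ht, seg_succ, hM, ← ih]
      have : sim h e0 I (Nat.count (Act h e0 I) t) = I t := by
        simp only [sim]; rw [Nat.nth_count ht]
      rw [this]
      rcases Part.eq_none_or_eq_some (R h e0 I t) with hn | ⟨s, hs⟩
      · rw [hn]; simp
      · rw [hs]
        simp only [Part.bind_some, Part.map_some]
        exact step_fst (fun hm => ht ⟨s, hs, hm⟩)
    · rw [if_neg ht, add_zero, ← ih]
      obtain ⟨s, hs, hm⟩ := not_not.1 ht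
      rw [hs]
      simp [step_mem hm]

theorem witness (M : List Datum →. ℕ) (hM0 : M [] = Part.some e0)
    (hM : ∀ σ x, M (σ ++ [x]) = (M σ).bind (fun e => h (e, x)))
    (hL : LocConvOn M (sim h e0 I)) {r : ℕ} {sr : State} (hr : R h e0 I r = Part.some sr) :
    ∀ n ss, R h e0 I (r + n) = Part.some ss → sr.2 ⊆ ss.2 ∧ (sr = ss ∨ ∃ u < r + n,
      I u ∉ sr.2 ∧ I u ∈ ss.2 ∧
      (((I u).2 = true ∧ (I u).1 ∉ W sr.1) ∨ ((I u).2 = false ∧ (I u).1 ∈ W sr.1))) := by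
  classical
  intro n
  induction n with
  | zero =>
    intro ss hs
    have : sr = ss := Part.some_injective (hr.symm.trans hs)
    subst this
    exact ⟨fun _ hx => hx, Or.inl rfl⟩
  | succ n ih =>
    intro s' hs'
    obtain ⟨s, h1, h2⟩ := R_pred h e0 I (t := r + n) hs'
    obtain ⟨hsub, hor⟩ := ih s h1
    rcases step_cases h2 with rfl | ⟨h3, h4, h5⟩
    · refine ⟨hsub, hor.imp id ?_⟩
      rintro ⟨u, hu, hh⟩
      exact ⟨u, by omega, hh⟩
    · have hsub' : s.2 ⊆ s'.2 := by rw [h5]; exact List.subset_cons_self _ _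
      refine ⟨fun _ hx => hsub' (hsub hx), Or.inr ?_⟩
      rcases hor with rfl | ⟨u, hu, hu1, hu2, hu3⟩
      · refine ⟨r + n, by omega, h3, by rw [h5]; exact List.mem_cons_self, ?_⟩
        have ht : Act h e0 I (r+n) := by
          rintro ⟨s2, hs2, hm⟩
          have : sr = s2 := Part.some_injective (h1.symm.trans hs2)
          subst this
          exact h3 hm
        have f1 := R_fst h e0 I M hM0 hM (r+n)
        have f2 := R_fst h e0 I M hM0 hM (r+n+1)
        have hs'' : R h e0 I (r+n+1) = Part.some s' := hs'
        rw [h1, Part.map_some] at f1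
        rw [hs'', Part.map_some, Nat.count_succ, if_pos ht] at f2
        have := hL _ _ _ f1.symm f2.symm (Ne.symm h4)
        have e : sim h e0 I (Nat.count (Act h e0 I) (r+n)) = I (r+n) := by
          simp only [sim]; rw [Nat.nth_count ht]
        rwa [e] at this
      · exact ⟨u, by omega, hu1, hsub' hu2, hu3⟩

theorem converge (M : List Datum →. ℕ) (hM0 : M [] = Part.some e0)
    (hM : ∀ σ x, M (σ ++ [x]) = (M σ).bind (fun e => h (e, x))) {L : Set ℕ}
    (hI : IsInformant L I) (hE : ExLearnsFrom M L (sim h e0 I)) :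
    ∃ t₀ s, W s.1 = L ∧ ∀ t, t₀ ≤ t → R h e0 I t = Part.some s := by
  classical
  obtain ⟨k, e, hW, hk⟩ := hE
  have inf := act_infinite h e0 I hI.2
  have hfst : ∀ t, Nat.nth (Act h e0 I) k ≤ t → ∃ s, R h e0 I t = Part.some s ∧ s.1 = e := by
    intro t ht
    have f := R_fst h e0 I M hM0 hM t
    rw [hk] at f
    · have : e ∈ (R h e0 I t).map Prod.fst := by rw [f]; exact Part.mem_some _
      obtain ⟨s, hs, he⟩ := (Part.mem_map_iff _).1 this
      exact ⟨s, Part.eq_some_iff.2 hs, he⟩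
    · have := Nat.count_monotone (Act h e0 I) ht
      rwa [Nat.count_nth_of_infinite inf] at this
  obtain ⟨s, hs, he⟩ := hfst _ le_rfl
  refine ⟨Nat.nth (Act h e0 I) k, s, he ▸ hW, fun t ht => ?_⟩
  induction t, ht using Nat.le_induction with
  | base => exact hs
  | succ t ht ih =>
    obtain ⟨s', hs', he'⟩ := hfst (t+1) (by omega)
    obtain ⟨s2, h1, h2⟩ := R_pred h e0 I hs'
    have : s = s2 := Part.some_injective (ih.symm.trans h1)
    subst this
    rcases step_cases h2 with rfl | ⟨_, h4, _⟩
    · exact hs'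
    · exact absurd (he'.trans he.symm) h4

end

theorem exists_informant (L : Set ℕ) : ∃ I, IsInformant L I := by
  classical
  exact ⟨fun n => (n, decide (n ∈ L)), by simp, fun x => ⟨x, rfl⟩⟩

/-- The index of a state. -/
def enc (c : Code) (s : State) : ℕ := Encodable.encode (c.curry (Encodable.encode s))

theorem curry_comp (c : Code) : Computable (fun n : ℕ => Encodable.encode (c.curry n)) :=
  Computable.encode.comp
    ((Code.primrec₂_curry.comp (Primrec.const c) Primrec.id).to_comp)

theorem enc_comp (c : Code) : Computable (enc c) := (curry_comp c).comp Computable.encode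

theorem enc_inj (c : Code) {s s' : State} (hs : enc c s = enc c s') : s = s' :=
  Encodable.encode_injective (Code.curry_inj (Encodable.encode_injective hs)).2

/-- Recover the state from its index. -/
def dec (c : Code) (p : ℕ) : Part State :=
  (Nat.rfind (fun n => Part.some (decide (Encodable.encode (c.curry n) = p)))).bind
    (fun n => ((Encodable.decode n : Option State) : Part State))

theorem dec_part (c : Code) : Partrec (dec c) := by
  refine Partrec.bind (Partrec.rfind ?_) ?_
  · have : Computable₂ (fun (p n : ℕ) => decide (Encodable.encode (c.curry n) = p)) :=
      (Primrec.eq (α := ℕ)).decide.to_comp.comp ((curry_comp c).comp Computable.snd) Computable.fst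
    exact this.partrec
  · exact Computable.ofOption (Computable.decode.comp Computable.snd)

theorem dec_enc (c : Code) (s : State) : dec c (enc c s) = Part.some s := by
  have : Nat.rfind (fun n => Part.some (decide (Encodable.encode (c.curry n) = enc c s)))
      = Part.some (Encodable.encode s) := by
    refine Part.eq_some_iff.2 (Nat.mem_rfind.2 ?_)
    refine ⟨by simp [enc], ?_⟩
    intro m hm
    have : Encodable.encode (c.curry m) ≠ enc c s := by
      intro he
      have := (Code.curry_inj (Encodable.encode_injective he)).2
      omega
    simp [this]
  rw [dec, this]
  simp only [Part.bind_some, Encodable.encodek]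
  rfl

end LocWb

/-- Every class learnable by a locally conservative iterative learner from informant is
learnable by a witness-based iterative learner: `[ItInfLocConvEx] ⊆ [ItInfWbEx]`. -/
theorem locConv_subset_wb (𝓛 : Set (Set ℕ)) (h : ItInfLocConvEx 𝓛) : ItInfWbEx 𝓛 := by
  obtain ⟨M, hMp, hMit, hEx, hLC⟩ := h
  by_cases hne : 𝓛 = ∅
  · subst hne
    exact ⟨M, hMp, hMit, hEx, fun L hL => absurd hL (Set.notMem_empty L)⟩
  obtain ⟨h, hh, hM⟩ := hMit
  obtain ⟨e0, hM0⟩ : ∃ e0, M [] = Part.some e0 := by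
    rcases Part.eq_none_or_eq_some (M []) with hn | hs
    · exfalso
      have hall : ∀ σ, M σ = Part.none := by
        intro σ
        induction σ using List.reverseRecOn with
        | nil => exact hn
        | append_singleton σ x ih => rw [hM, ih]; simp
      obtain ⟨L, hL⟩ := Set.nonempty_iff_ne_empty.2 hne
      obtain ⟨I, hI⟩ := LocWb.exists_informant L
      obtain ⟨t, e, _, ht⟩ := hEx L hL I hI
      have := ht t le_rfl
      rw [hall] at this
      exact Part.some_ne_none _ this.symm
    · exact hs
  obtain ⟨c, hc⟩ := LocWb.exists_index
  have hc' : ∀ s y, y ∈ W (LocWb.enc c s) ↔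
    ((y, false) ∉ s.2 ∧ ((y, true) ∈ s.2 ∨ y ∈ W s.1)) := hc
  have hN : ∀ I t, (LocWb.run h (e0, []) (seg I t)) = LocWb.R h e0 I t := fun _ _ => rfl
  refine ⟨fun σ => (LocWb.run h (e0, []) σ).map (LocWb.enc c), ?_, ?_, ?_, ?_⟩
  · exact (LocWb.run_part hh _).map ((LocWb.enc_comp c).comp Computable.snd).to₂
  · refine ⟨fun q => (LocWb.dec c q.1).bind
      (fun s => (LocWb.step h (s, q.2)).map (LocWb.enc c)), ?_, ?_⟩
    · refine Partrec.bind ((LocWb.dec_part c).comp Computable.fst) ?_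
      refine Partrec.map ?_ ((LocWb.enc_comp c).comp Computable.snd).to₂
      exact (LocWb.step_part hh).comp
        (Computable.snd.pair (Computable.snd.comp Computable.fst))
    · intro σ x
      simp only [LocWb.run_append]
      rcases Part.eq_none_or_eq_some (LocWb.run h (e0, []) σ) with hn | ⟨s, hs⟩
      · rw [hn]; simp
      · rw [hs]; simp [LocWb.dec_enc]
  · intro L hL I hI
    obtain ⟨t₀, s, hW, ht⟩ := LocWb.converge h e0 I M hM0 hM hI
      (hEx L hL _ (LocWb.sim_informant h e0 I hI))
    refine ⟨t₀, LocWb.enc c s, ?_, fun t h' => ?_⟩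
    · have hsub := LocWb.R_sub h e0 I (ht t₀ le_rfl)
      ext y
      rw [hc', hW]
      constructor
      · rintro ⟨_, h2 | h2⟩
        · obtain ⟨u, _, hu⟩ := hsub _ h2
          have := hI.1 u
          rw [hu] at this
          simpa using this
        · exact h2
      · intro hy
        refine ⟨fun h2 => ?_, Or.inr hy⟩
        obtain ⟨u, _, hu⟩ := hsub _ h2
        have := hI.1 u
        rw [hu] at this
        simp at this
        exact this hy
    · simp only [hN, ht t h', Part.map_some]
  · intro L hL I hI r s t hrs hst er es et her hes het hne
    have get : ∀ {t e}, (LocWb.run h (e0, []) (seg I t)).map (LocWb.enc c) = Part.some e →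
        ∃ q, LocWb.R h e0 I t = Part.some q ∧ LocWb.enc c q = e := by
      intro t e he
      have : e ∈ (LocWb.run h (e0, []) (seg I t)).map (LocWb.enc c) := by
        rw [he]; exact Part.mem_some _
      obtain ⟨q, h1, h2⟩ := (Part.mem_map_iff _).1 this
      exact ⟨q, Part.eq_some_iff.2 h1, h2⟩
    obtain ⟨sr, hsr, rfl⟩ := get her
    obtain ⟨ss, hss, rfl⟩ := get hes
    obtain ⟨st, hst', rfl⟩ := get het
    have lc := hLC L hL _ (LocWb.sim_informant h e0 I hI)
    obtain ⟨n, rfl⟩ := Nat.exists_eq_add_of_le hrs.le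
    obtain ⟨m, rfl⟩ := Nat.exists_eq_add_of_le hst
    have w := (LocWb.witness h e0 I M hM0 hM lc hsr n ss hss).2
    have sub := (LocWb.witness h e0 I M hM0 hM lc hss m st hst').1
    rcases w with rfl | ⟨u, hu, hu1, hu2, hu3⟩
    · exact absurd rfl hne
    have hu4 := sub hu2
    rcases hu3 with ⟨hb, hx⟩ | ⟨hb, hx⟩
    · left
      have hd : I u = ((I u).1, true) := by rw [← hb]
      refine ⟨(I u).1, ?_, ?_, ?_⟩
      · exact LocWb.mem_seg.2 ⟨u, hu, hd⟩
      · rw [hc']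
        refine ⟨fun h2 => ?_, Or.inl (hd ▸ hu4)⟩
        obtain ⟨v, _, hv⟩ := LocWb.R_sub h e0 I hst' _ h2
        have h3 := hI.1 v
        rw [hv] at h3
        simp at h3
        exact h3 ((hI.1 u).1 hb)
      · rw [hc']
        rintro ⟨_, h2 | h2⟩
        · exact hu1 (hd ▸ h2)
        · exact hx h2
    · right
      have hd : I u = ((I u).1, false) := by rw [← hb]
      refine ⟨(I u).1, ?_, ?_, ?_⟩
      · exact LocWb.mem_seg.2 ⟨u, hu, hd⟩
      · rw [hc']
        exact ⟨fun h2 => hu1 (hd ▸ h2), Or.inr hx⟩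
      · rw [hc']
        exact fun h2 => h2.1 (hd ▸ hu4)
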